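/- For any two distinct points p, q in a half-open square R of side w > 0, the recursion defining split(p, q, R) terminates, so split(p, q, R) is a well-defined region quadtree; moreover split(p, q, R) is well-formed for R, keys(split(p, q, R)) = {p, q}, and Leaf p and Leaf q occur as two distinct children of one and the same Internal node of split(p, q, R). -/

import Mathlib

/-- The four quadrant directions. -/
inductive Dir : Type
  | nw | ne | sw | se
  deriving DecidableEq

noncomputable section

/-- A half-open square `[x, x+w) × [y, y+w)` given by its corner `(x, y)` and side `w`. -/
structure Sq where
  x : ℝ
  y : ℝ
  w : ℝ

/-- The set of points of a half-open square. -/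
def Sq.set (R : Sq) : Set (ℝ × ℝ) :=
  {p : ℝ × ℝ | R.x ≤ p.1 ∧ p.1 < R.x + R.w ∧ R.y ≤ p.2 ∧ p.2 < R.y + R.w}

/-- The quadrant of a square in a given direction: a half-open square of side `w/2`. -/
def Sq.quad (R : Sq) : Dir → Sq
  | .nw => ⟨R.x, R.y, R.w / 2⟩
  | .ne => ⟨R.x + R.w / 2, R.y, R.w / 2⟩
  | .sw => ⟨R.x, R.y + R.w / 2, R.w / 2⟩
  | .se => ⟨R.x + R.w / 2, R.y + R.w / 2, R.w / 2⟩

/-- The direction (routing quadrant) of a point `p` in the square `R`. -/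
def Sq.dirOf (R : Sq) (p : ℝ × ℝ) : Dir :=
  if p.1 < R.x + R.w / 2 then
    if p.2 < R.y + R.w / 2 then .nw else .sw
  else
    if p.2 < R.y + R.w / 2 then .ne else .se

/-- The square reached after `d` routing steps for the point `p`, starting from the root
square `R` (so `routeSq R p 0 = R`). -/
def routeSq (R : Sq) (p : ℝ × ℝ) : ℕ → Sq
  | 0 => R
  | n + 1 => (routeSq R p n).quad ((routeSq R p n).dirOf p)

/-- The `n`-th element of the routing sequence of `p`, i.e. the direction taken at step `n`. -/
def routeDir (R : Sq) (p : ℝ × ℝ) (n : ℕ) : Dir :=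
  (routeSq R p n).dirOf p

/-- A region quadtree: `empty`, a `leaf` storing a key, or an `internal` node with four
children (nw, ne, sw, se). -/
inductive QTree : Type
  | empty : QTree
  | leaf (p : ℝ × ℝ) : QTree
  | internal (nw ne sw se : QTree) : QTree
  deriving DecidableEq

/-- The child of a tree in a given direction (for internal nodes). -/
def QTree.child : QTree → Dir → QTree
  | .internal a _ _ _, .nw => a
  | .internal _ b _ _, .ne => b
  | .internal _ _ c _, .sw => c
  | .internal _ _ _ e, .se => e
  | _, _ => .empty

/-- The set of keys appearing in the leaf nodes of a quadtree. -/
def QTree.keys : QTree → Set (ℝ × ℝ)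
  | .empty => ∅
  | .leaf p => {p}
  | .internal a b c e => a.keys ∪ b.keys ∪ c.keys ∪ e.keys

/-- `WF t R`: the tree `t` is well-formed for the half-open square `R`: an `empty` tree is
well-formed; a leaf is well-formed if its key lies in `R`; an internal node is well-formed if
each child is well-formed for the corresponding quadrant of `R`. -/
inductive WF : QTree → Sq → Prop
  | empty (R : Sq) : WF .empty R
  | leaf (p : ℝ × ℝ) (R : Sq) (hp : p ∈ R.set) : WF (.leaf p) R
  | internal (a b c e : QTree) (R : Sq)
      (ha : WF a (R.quad .nw)) (hb : WF b (R.quad .ne))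
      (hc : WF c (R.quad .sw)) (he : WF e (R.quad .se)) :
      WF (.internal a b c e) R

/-- The internal node whose child in direction `d` is `f d`. -/
def mkNode (f : Dir → QTree) : QTree :=
  .internal (f .nw) (f .ne) (f .sw) (f .se)

/-- Fuelled version of `split`: given fuel `n + 1`, if `p` and `q` lie in different quadrants
of `R`, return the internal node with `leaf p` and `leaf q` in their respective quadrants and
`empty` elsewhere; otherwise recurse (with fuel `n`) into the common quadrant containing `p`
and `q`, placing `empty` elsewhere. -/
def splitFuel : ℕ → ℝ × ℝ → ℝ × ℝ → Sq → QTree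
  | 0, _, _, _ => .empty
  | n + 1, p, q, R =>
    if R.dirOf p = R.dirOf q then
      mkNode fun d => if d = R.dirOf p then splitFuel n p q (R.quad (R.dirOf p)) else .empty
    else
      mkNode fun d =>
        if d = R.dirOf p then .leaf p else if d = R.dirOf q then .leaf q else .empty

open Classical in
/-- Enough fuel for the recursion defining `split p q R`: one more than the first depth
(along the routing path of `p`) at which `p` and `q` take different directions. -/
def splitDepth (p q : ℝ × ℝ) (R : Sq) : ℕ :=
  if h : ∃ n : ℕ, (routeSq R p n).dirOf p ≠ (routeSq R p n).dirOf q then Nat.find h + 1 else 0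

/-- `split p q R`, the region quadtree containing exactly the two distinct keys `p, q ∈ R`,
defined by the recursion described above (realized via the fuelled function with enough
fuel for the recursion to have terminated). -/
def split (p q : ℝ × ℝ) (R : Sq) : QTree :=
  splitFuel (splitDepth p q R) p q R

/-- Insertion of a key `p` into a quadtree well-formed for the region `R`. -/
def qinsert (p : ℝ × ℝ) : QTree → Sq → QTree
  | .empty, _ => .leaf p
  | .leaf q, R => if q = p then .leaf p else split p q R
  | .internal a b c e, R =>
    match R.dirOf p with
    | .nw => .internal (qinsert p a (R.quad .nw)) b c e
    | .ne => .internal a (qinsert p b (R.quad .ne)) c e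
    | .sw => .internal a b (qinsert p c (R.quad .sw)) e
    | .se => .internal a b c (qinsert p e (R.quad .se))

/-- The subtree of `t` at a direction sequence (defined only when the path exists). -/
def subtreeAt : QTree → List Dir → Option QTree
  | t, [] => some t
  | .internal a b c e, d :: s =>
    match d with
    | .nw => subtreeAt a s
    | .ne => subtreeAt b s
    | .sw => subtreeAt c s
    | .se => subtreeAt e s
  | .empty, _ :: _ => none
  | .leaf _, _ :: _ => none

theorem mem_quad_dirOf (R : Sq) (p : ℝ × ℝ) (hp : p ∈ R.set) :
    p ∈ (R.quad (R.dirOf p)).set := by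
  obtain ⟨h1, h2, h3, h4⟩ := hp
  unfold Sq.dirOf
  split_ifs <;> simp only [Sq.quad, Sq.set, Set.mem_ofPred_eq] <;>
    refine ⟨?_, ?_, ?_, ?_⟩ <;> linarith

theorem quad_w (R : Sq) (d : Dir) : (R.quad d).w = R.w / 2 := by
  cases d <;> rfl

theorem routeSq_shift (R : Sq) (p : ℝ × ℝ) (n : ℕ) :
    routeSq R p (n + 1) = routeSq (R.quad (R.dirOf p)) p n := by
  induction n with
  | zero => rfl
  | succ k ih => rw [routeSq, ih]; rfl

theorem routeSq_w (R : Sq) (p : ℝ × ℝ) (n : ℕ) : (routeSq R p n).w = R.w * (1 / 2) ^ n := by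
  induction n with
  | zero => simp [routeSq]
  | succ k ih => rw [routeSq, quad_w, ih]; ring

theorem dirs_differ (R : Sq) (hw : 0 < R.w) (p q : ℝ × ℝ)
    (hp : p ∈ R.set) (hq : q ∈ R.set) (hpq : p ≠ q) :
    ∃ n : ℕ, (routeSq R p n).dirOf p ≠ (routeSq R p n).dirOf q := by
  by_contra! h
  have hmem : ∀ n, p ∈ (routeSq R p n).set ∧ q ∈ (routeSq R p n).set := by
    intro n
    induction n with
    | zero => exact ⟨hp, hq⟩
    | succ k ih =>
      refine ⟨mem_quad_dirOf _ _ ih.1, ?_⟩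
      rw [routeSq, h k]
      exact mem_quad_dirOf _ _ ih.2
  have key : ∀ δ : ℝ, (∀ n : ℕ, |δ| < R.w * (1 / 2) ^ n) → δ = 0 := by
    intro δ hδ
    by_contra hne
    have hpos : 0 < |δ| / R.w := div_pos (abs_pos.mpr hne) hw
    obtain ⟨n, hn⟩ := exists_pow_lt_of_lt_one hpos (by norm_num : (1 / 2 : ℝ) < 1)
    have h2 := hδ n
    rw [lt_div_iff₀ hw] at hn
    linarith
  apply hpq
  apply Prod.ext
  · refine sub_eq_zero.mp (key _ fun n => ?_)
    obtain ⟨⟨a1, a2, a3, a4⟩, ⟨b1, b2, b3, b4⟩⟩ := hmem n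
    rw [← routeSq_w R p n, abs_lt]
    constructor <;> linarith
  · refine sub_eq_zero.mp (key _ fun n => ?_)
    obtain ⟨⟨a1, a2, a3, a4⟩, ⟨b1, b2, b3, b4⟩⟩ := hmem n
    rw [← routeSq_w R p n, abs_lt]
    constructor <;> linarith

theorem mkNode_wf (f : Dir → QTree) (R : Sq) (h : ∀ d, WF (f d) (R.quad d)) :
    WF (mkNode f) R :=
  WF.internal _ _ _ _ _ (h _) (h _) (h _) (h _)

theorem mkNode_keys (f : Dir → QTree) : (mkNode f).keys = ⋃ d, (f d).keys := by
  ext x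
  simp only [mkNode, QTree.keys, Set.mem_union, Set.mem_iUnion]
  constructor
  · rintro (((h | h) | h) | h) <;> exact ⟨_, h⟩
  · rintro ⟨d, h⟩
    cases d <;> simp [h]

theorem mkNode_child (f : Dir → QTree) (d : Dir) : (mkNode f).child d = f d := by
  cases d <;> rfl

theorem mkNode_subtreeAt (f : Dir → QTree) (d : Dir) (s : List Dir) :
    subtreeAt (mkNode f) (d :: s) = subtreeAt (f d) s := by
  cases d <;> simp [mkNode, subtreeAt]

theorem split_core (p q : ℝ × ℝ) (m : ℕ) : ∀ R : Sq, p ∈ R.set → q ∈ R.set →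
    (routeSq R p m).dirOf p ≠ (routeSq R p m).dirOf q →
    (∀ k < m, (routeSq R p k).dirOf p = (routeSq R p k).dirOf q) →
    (∀ n, m + 1 ≤ n → splitFuel n p q R = splitFuel (m + 1) p q R) ∧
    WF (splitFuel (m + 1) p q R) R ∧
    (splitFuel (m + 1) p q R).keys = {p, q} ∧
    (∃ (s : List Dir) (u : QTree), subtreeAt (splitFuel (m + 1) p q R) s = some u ∧
      (∃ a b c e : QTree, u = .internal a b c e) ∧
      ∃ d₁ d₂ : Dir, d₁ ≠ d₂ ∧ u.child d₁ = .leaf p ∧ u.child d₂ = .leaf q) := by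
  induction m with
  | zero =>
    intro R hp hq hd _
    have hd : R.dirOf p ≠ R.dirOf q := hd
    have e : ∀ n, splitFuel (n + 1) p q R = mkNode fun d =>
        if d = R.dirOf p then .leaf p else if d = R.dirOf q then .leaf q else .empty := by
      intro n
      rw [splitFuel, if_neg hd]
    refine ⟨?_, ?_, ?_, ?_⟩
    · intro n hn
      obtain ⟨k, rfl⟩ : ∃ k, n = k + 1 := ⟨n - 1, by omega⟩
      rw [e, e]
    · rw [e]
      apply mkNode_wf
      intro d
      split_ifs with h1 h2
      · subst h1; exact .leaf _ _ (mem_quad_dirOf _ _ hp)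
      · subst h2; exact .leaf _ _ (mem_quad_dirOf _ _ hq)
      · exact .empty _
    · rw [e, mkNode_keys]
      ext x
      simp only [Set.mem_iUnion, Set.mem_insert_iff, Set.mem_singleton_iff]
      constructor
      · rintro ⟨d, h⟩
        split_ifs at h
        · exact Or.inl h
        · exact Or.inr h
        · exact h.elim
      · rintro (h | h)
        · exact ⟨R.dirOf p, by simp [QTree.keys, h]⟩
        · exact ⟨R.dirOf q, by simp [QTree.keys, h, hd.symm]⟩
    · refine ⟨[], _, by rw [subtreeAt], ⟨_, _, _, _, e 0⟩, R.dirOf p, R.dirOf q, hd, ?_, ?_⟩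
      · rw [e, mkNode_child, if_pos rfl]
      · rw [e, mkNode_child, if_neg hd.symm, if_pos rfl]
  | succ m ih =>
    intro R hp hq hd hlt
    have h0 : R.dirOf p = R.dirOf q := hlt 0 (by omega)
    have e : ∀ n, splitFuel (n + 1) p q R = mkNode fun d =>
        if d = R.dirOf p then splitFuel n p q (R.quad (R.dirOf p)) else .empty := by
      intro n
      rw [splitFuel, if_pos h0]
    obtain ⟨i1, i2, i3, s, u, i4, i5⟩ := ih (R.quad (R.dirOf p)) (mem_quad_dirOf _ _ hp)
      (by rw [h0]; exact mem_quad_dirOf _ _ hq)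
      (by rw [← routeSq_shift]; exact hd)
      (fun k hk => by rw [← routeSq_shift]; exact hlt (k + 1) (by omega))
    refine ⟨?_, ?_, ?_, R.dirOf p :: s, u, ?_, i5⟩
    · intro n hn
      obtain ⟨k, rfl⟩ : ∃ k, n = k + 1 := ⟨n - 1, by omega⟩
      rw [e, e, i1 k (by omega)]
    · rw [e]
      apply mkNode_wf
      intro d
      split_ifs with h1
      · subst h1; exact i2
      · exact .empty _
    · rw [e, mkNode_keys, ← i3]
      ext x
      simp only [Set.mem_iUnion]
      constructor
      · rintro ⟨d, h⟩
        split_ifs at h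
        · exact h
        · exact h.elim
      · intro h
        exact ⟨R.dirOf p, by rw [if_pos rfl]; exact h⟩
    · rw [e, mkNode_subtreeAt, if_pos rfl]
      exact i4

/-- For any two distinct points `p, q` in a half-open square `R` of side `w > 0`,
the recursion defining `split(p, q, R)` terminates (the fuelled computation stabilizes, so
`split(p, q, R)` is a well-defined region quadtree); moreover `split(p, q, R)` is well-formed
for `R`, `keys(split(p, q, R)) = {p, q}`, and `leaf p` and `leaf q` occur as two distinct
children of one and the same internal node of `split(p, q, R)`. -/
theorem split_terminates_wf_keys (R : Sq) (hw : 0 < R.w) (p q : ℝ × ℝ)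
    (hp : p ∈ R.set) (hq : q ∈ R.set) (hpq : p ≠ q) :
    (∃ n₀ : ℕ, ∀ n, n₀ ≤ n → splitFuel n p q R = split p q R) ∧
    WF (split p q R) R ∧
    (split p q R).keys = {p, q} ∧
    (∃ (s : List Dir) (u : QTree), subtreeAt (split p q R) s = some u ∧
      (∃ a b c e : QTree, u = .internal a b c e) ∧
      ∃ d₁ d₂ : Dir, d₁ ≠ d₂ ∧ u.child d₁ = .leaf p ∧ u.child d₂ = .leaf q) := by
  classical
  have h := dirs_differ R hw p q hp hq hpq
  have hs : split p q R = splitFuel (Nat.find h + 1) p q R := by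
    unfold split splitDepth
    rw [dif_pos h]
  have hc := split_core p q (Nat.find h) R hp hq (Nat.find_spec h)
    (fun k hk => not_not.mp (Nat.find_min h hk))
  rw [hs]
  exact ⟨⟨_, hc.1⟩, hc.2⟩
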